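/- For every field F and every natural number n ≥ 2 there exists a tensor T : [n] × [n] × [n] → F taking only the values 0 and 1 whose tensor rank over F is exactly 3n − 2H(n−1) − ⌊lg(n−1)⌋ − 2, where H(m) is the number of 1s in the binary expansion of m. In particular this rank is at least 3n − C·lg n for an absolute constant C. -/

import Mathlib

/-- The tensor rank of an order-3 tensor `T : [n₁] × [n₂] × [n₃] → F`:
the least `r` such that `T` is the sum of `r` simple tensors. -/
noncomputable def rank3 {F : Type*} [Field F] {n1 n2 n3 : ℕ}
    (T : Fin n1 → Fin n2 → Fin n3 → F) : ℕ :=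
  sInf {r : ℕ | ∃ (a : Fin r → Fin n1 → F) (b : Fin r → Fin n2 → F) (c : Fin r → Fin n3 → F),
    ∀ i j k, T i j k = ∑ l, a l i * b l j * c l k}

/-!
A `0/1` tensor has rank at most its number of ones; the tensors built here attain this bound over
every field. Slices of `T` that are linearly independent can be eliminated: after adding suitable
combinations of them to all slices, the rank has dropped by at least their number. If new slices are
glued to a tensor, each with a one at a position of its own outside the original block, eliminating
them lowers the rank by their number, and the combinations added on the way vanish on the original
block, which is therefore still intact.

Doubling adds a single layer and turns an `a × b` front into `(a + b) × (a + b)` with `a + b` new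
ones. Following the binary expansion of `m = n - 1` with it reaches an `m × m` front with
`⌊lg m⌋ + 1` layers and `2 m + 1 - 2 H(m)` ones. There remain `m - ⌊lg m⌋` unused layers, each of
which receives one more one in a new column.
-/

universe u

section TensorRank

variable {F α β γ α' β' γ' κ : Type*} [Field F]

/-- The tensor `T` is a sum of `r` simple tensors. The index types are arbitrary so that tensors can
be glued along sum types. -/
def IsSumOfSimple (r : ℕ) (T : α → β → γ → F) : Prop :=
  ∃ (a : Fin r → α → F) (b : Fin r → β → F) (c : Fin r → γ → F),
    ∀ i j k, T i j k = ∑ l, a l i * b l j * c l k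

/-- The rank of a tensor of order three with arbitrary index types; it has the junk value `0` when
`T` is not a finite sum of simple tensors. -/
noncomputable def tensorRank (T : α → β → γ → F) : ℕ :=
  sInf {r | IsSumOfSimple r T}

theorem rank3_eq_tensorRank {a b c : ℕ} (T : Fin a → Fin b → Fin c → F) :
    rank3 T = tensorRank T :=
  rfl

theorem IsSumOfSimple.tensorRank_le {r : ℕ} {T : α → β → γ → F} (h : IsSumOfSimple r T) :
    tensorRank T ≤ r :=
  Nat.sInf_le h

theorem isSumOfSimple_card [Fintype κ] {T : α → β → γ → F} (a : κ → α → F) (b : κ → β → F)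
    (c : κ → γ → F) (h : ∀ i j k, T i j k = ∑ l, a l i * b l j * c l k) :
    IsSumOfSimple (Fintype.card κ) T := by
  let e := (Fintype.equivFin κ).symm
  exact ⟨a ∘ e, b ∘ e, c ∘ e, fun i j k =>
    (h i j k).trans (e.sum_comp fun l => a l i * b l j * c l k).symm⟩

theorem isSumOfSimple_tensorRank [Finite α] [Finite β] (T : α → β → γ → F) :
    IsSumOfSimple (tensorRank T) T := by
  classical
  have := Fintype.ofFinite α
  have := Fintype.ofFinite β
  refine Nat.sInf_mem (s := {r | IsSumOfSimple r T}) ⟨_, isSumOfSimple_card (κ := α × β)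
    (fun x => Pi.single x.1 1) (fun x => Pi.single x.2 1) (fun x => T x.1 x.2) fun i j k => ?_⟩
  simp [Fintype.sum_prod_type, Pi.single_apply]

theorem IsSumOfSimple.comp {r : ℕ} {T : α → β → γ → F} (h : IsSumOfSimple r T)
    (e : α' → α) (f : β' → β) (g : γ' → γ) :
    IsSumOfSimple r fun i j k => T (e i) (f j) (g k) := by
  obtain ⟨a, b, c, h⟩ := h
  exact ⟨fun l => a l ∘ e, fun l => b l ∘ f, fun l => c l ∘ g, fun i j k => h (e i) (f j) (g k)⟩

theorem tensorRank_comp_le [Finite α] [Finite β] (T : α → β → γ → F)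
    (e : α' → α) (f : β' → β) (g : γ' → γ) :
    tensorRank (fun i j k => T (e i) (f j) (g k)) ≤ tensorRank T :=
  ((isSumOfSimple_tensorRank T).comp e f g).tensorRank_le

theorem IsSumOfSimple.swap₁₂ {r : ℕ} {T : α → β → γ → F} (h : IsSumOfSimple r T) :
    IsSumOfSimple r fun j i k => T i j k := by
  obtain ⟨a, b, c, h⟩ := h
  exact ⟨b, a, c, fun j i k => by simp only [h, mul_comm (a _ _)]⟩

theorem IsSumOfSimple.swap₁₃ {r : ℕ} {T : α → β → γ → F} (h : IsSumOfSimple r T) :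
    IsSumOfSimple r fun k j i => T i j k := by
  obtain ⟨a, b, c, h⟩ := h
  exact ⟨c, b, a, fun k j i => by simp only [h, mul_comm, mul_left_comm]⟩

theorem tensorRank_swap₁₂ (T : α → β → γ → F) :
    tensorRank (fun j i k => T i j k) = tensorRank T :=
  congrArg sInf <| Set.ext fun _ => ⟨fun h => h.swap₁₂, fun h => h.swap₁₂⟩

theorem tensorRank_swap₁₃ (T : α → β → γ → F) :
    tensorRank (fun k j i => T i j k) = tensorRank T :=
  congrArg sInf <| Set.ext fun _ => ⟨fun h => h.swap₁₃, fun h => h.swap₁₃⟩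

end TensorRank

section Elimination

variable {F α β γ ι κ : Type*} [Field F]

theorem exists_finset_card_add_card_le_and_mem_span_sup {K M : Type*} [DivisionRing K]
    [AddCommGroup M] [Module K M] [Fintype ι] [Fintype κ] {u : ι → M} {v : κ → M}
    (hu : LinearIndependent K u) (huv : ∀ x, u x ∈ Submodule.span K (Set.range v)) :
    ∃ s : Finset κ, s.card + Fintype.card ι ≤ Fintype.card κ ∧
      ∀ l, v l ∈ Submodule.span K (v '' s) ⊔ Submodule.span K (Set.range u) := by
  classical
  have hinl : LinearIndepOn K (Sum.elim v u) (Set.range Sum.inr) :=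
    (linearIndepOn_range_iff Sum.inr_injective _).2 hu
  obtain ⟨b, -, hub, hspan, hb⟩ := exists_linearIndepOn_extension hinl (Set.subset_univ _)
  let s : Finset κ := {l | Sum.inl l ∈ b}
  refine ⟨s, ?_, fun l => ?_⟩
  · have hmem : ∀ x : s ⊕ ι, Sum.map (↑) id x ∈ b := by
      rintro (⟨l, hl⟩ | x)
      · simpa [s] using hl
      · exact hub ⟨x, rfl⟩
    have hli : LinearIndependent K (Sum.elim (fun l : s => v l) u) := by
      have hinj : Function.Injective fun x : s ⊕ ι => (⟨_, hmem x⟩ : b) := fun x y hxy =>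
        (Sum.map_injective.2 ⟨Subtype.val_injective, Function.injective_id⟩)
          (Subtype.ext_iff.1 hxy)
      convert hb.linearIndependent.comp _ hinj using 1
      ext (l | x) <;> rfl
    have hle := linearIndependent_le_span_aux' _ hli (Set.range v) (by
      rintro _ ⟨l | x, rfl⟩
      · exact Submodule.subset_span ⟨l, rfl⟩
      · exact huv x)
    simpa using hle.trans (Fintype.card_range_le v)
  · rw [← Submodule.span_union]
    refine Submodule.span_mono ?_ (hspan ⟨Sum.inl l, trivial, rfl⟩)
    rintro _ ⟨l' | x, hx, rfl⟩
    · exact Or.inl ⟨l', by simpa [s] using hx, rfl⟩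
    · exact Or.inr ⟨x, rfl⟩

theorem exists_tensorRank_add_card_le [Finite α] [Finite β] [Fintype ι] (T : α → β → γ → F)
    (p : ι → α) (hp : LinearIndependent F fun x => T (p x)) :
    ∃ c : α → ι → F,
      tensorRank (fun i j k => T i j k + ∑ x, c i x * T (p x) j k) + Fintype.card ι ≤
        tensorRank T := by
  obtain ⟨a, b, c, h⟩ := isSumOfSimple_tensorRank T
  let v : Fin (tensorRank T) → β → γ → F := fun l j k => b l j * c l k
  have hT (i : α) : T i = ∑ l, a l i • v l := by
    ext j k
    simp [h, v, Finset.sum_apply, mul_assoc]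
  have hv (i : α) : T i ∈ Submodule.span F (Set.range v) :=
    (Submodule.mem_span_range_iff_exists_fun F).2 ⟨_, (hT i).symm⟩
  obtain ⟨s, hs, hspan⟩ := exists_finset_card_add_card_le_and_mem_span_sup hp fun x => hv (p x)
  have hdecomp (i : α) :
      ∃ (w : s → F) (d : ι → F), ∑ l, w l • v l + ∑ x, d x • T (p x) = T i := by
    have hmem : T i ∈ Submodule.span F (v '' s) ⊔ Submodule.span F (Set.range (T ∘ p)) := by
      rw [hT]
      exact Submodule.sum_mem _ fun l _ => Submodule.smul_mem _ _ (hspan l)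
    obtain ⟨y, hy, z, hz, hyz⟩ := Submodule.mem_sup.1 hmem
    obtain ⟨w, rfl⟩ := (Submodule.mem_span_image_finset_iff_exists_fun F).1 hy
    obtain ⟨d, rfl⟩ := (Submodule.mem_span_range_iff_exists_fun F).1 hz
    exact ⟨w, d, hyz⟩
  choose w d hwd using hdecomp
  rw [Fintype.card_fin, ← Fintype.card_coe] at hs
  refine ⟨fun i x => -d i x, (Nat.add_le_add_right ?_ _).trans hs⟩
  refine (isSumOfSimple_card (fun (l : s) i => w i l) (fun l => b l) (fun l => c l)
    fun i j k => ?_).tensorRank_le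
  have hijk := congrFun (congrFun (hwd i) j) k
  simp only [Pi.add_apply, Finset.sum_apply, Pi.smul_apply, smul_eq_mul, v] at hijk
  simp [← hijk, mul_assoc]

theorem tensorRank_one [Finite α] [Finite β] [Nonempty α] [Nonempty β] [Nonempty γ] :
    tensorRank (1 : α → β → γ → F) = 1 := by
  refine le_antisymm ?_ ?_
  · simpa using (isSumOfSimple_card (κ := Unit) (T := (1 : α → β → γ → F)) 1 1 1
      (by simp)).tensorRank_le
  · obtain ⟨_, h⟩ := exists_tensorRank_add_card_le (ι := Unit) (1 : α → β → γ → F)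
      (fun _ => Classical.arbitrary α) (LinearIndependent.of_subsingleton () one_ne_zero)
    exact (Nat.le_add_left _ _).trans h

end Elimination

section ZeroExtend

variable {F M α β γ α' β' γ' : Type*} [Field F]

/-- The tensor `T` moved along the maps `e`, `f`, `g` of its index types and padded by zeros. The
maps are meant to be injective; where they are not, an arbitrary preimage is used. -/
noncomputable def zeroExtend [Zero M] (e : α → α') (f : β → β') (g : γ → γ')
    (T : α → β → γ → M) : α' → β' → γ' → M :=
  Function.extend e (fun i => Function.extend f (fun j => Function.extend g (T i j) 0) 0) 0

theorem zeroExtend_apply [Zero M] {e : α → α'} {f : β → β'} {g : γ → γ'}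
    (he : e.Injective) (hf : f.Injective) (hg : g.Injective) (T : α → β → γ → M)
    (i : α) (j : β) (k : γ) : zeroExtend e f g T (e i) (f j) (g k) = T i j k := by
  simp only [zeroExtend, he.extend_apply, hf.extend_apply, hg.extend_apply]

theorem zeroExtend_induction [Zero M] {p : M → Prop} (h0 : p 0) {T : α → β → γ → M}
    (hT : ∀ i j k, p (T i j k)) (e : α → α') (f : β → β') (g : γ → γ') (i : α') (j : β')
    (k : γ') : p (zeroExtend e f g T i j k) := by
  classical
  by_cases hi : ∃ x, e x = i <;> by_cases hj : ∃ x, f x = j <;> by_cases hk : ∃ x, g x = k <;>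
    simp [zeroExtend, Function.extend_def, hi, hj, hk, h0, hT]

theorem natCast_zeroExtend (e : α → α') (f : β → β') (g : γ → γ') (T : α → β → γ → ℕ) :
    (fun i j k => ((zeroExtend e f g T i j k : ℕ) : F)) =
      zeroExtend e f g fun i j k => (T i j k : F) := by
  classical
  ext i j k
  by_cases hi : ∃ x, e x = i <;> by_cases hj : ∃ x, f x = j <;> by_cases hk : ∃ x, g x = k <;>
    simp [zeroExtend, Function.extend_def, hi, hj, hk]

theorem tensorRank_zeroExtend [Finite α] [Finite β] [Finite α'] [Finite β']
    {e : α → α'} {f : β → β'} {g : γ → γ'} (he : e.Injective) (hf : f.Injective)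
    (hg : g.Injective) (T : α → β → γ → F) :
    tensorRank (zeroExtend e f g T) = tensorRank T := by
  classical
  refine le_antisymm ?_ ?_
  · obtain ⟨a, b, c, h⟩ := isSumOfSimple_tensorRank T
    refine IsSumOfSimple.tensorRank_le ⟨fun l => Function.extend e (a l) 0,
      fun l => Function.extend f (b l) 0, fun l => Function.extend g (c l) 0, fun i j k => ?_⟩
    by_cases hi : ∃ x, e x = i <;> by_cases hj : ∃ x, f x = j <;> by_cases hk : ∃ x, g x = k <;>
      simp [zeroExtend, Function.extend_def, hi, hj, hk, h]
  · simpa only [zeroExtend_apply he hf hg] using tensorRank_comp_le (zeroExtend e f g T) e f g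

end ZeroExtend

section Double

variable {F M α β γ : Type*} [Field F] [DecidableEq α] [DecidableEq β]

/-- The doubling of `T`: new rows indexed by `β`, new columns indexed by `α` and one new layer
`none`, which holds the identity matrices pairing new columns with old rows and new rows with old
columns. -/
def doubling [Zero M] [One M] (T : α → β → γ → M) : α ⊕ β → β ⊕ α → Option γ → M
  | .inl i, .inl j, some k => T i j k
  | .inl i, .inr x, none => if i = x then 1 else 0
  | .inr y, .inl j, none => if y = j then 1 else 0
  | _, _, _ => 0

theorem doubling_eq_zero_or_one [Zero M] [One M] {T : α → β → γ → M}
    (hT : ∀ i j k, T i j k = 0 ∨ T i j k = 1) (i j k) :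
    doubling T i j k = 0 ∨ doubling T i j k = 1 := by
  rcases i with i | y <;> rcases j with j | x <;> rcases k with _ | k <;> grind [doubling]

theorem natCast_doubling (T : α → β → γ → ℕ) :
    (fun i j k => ((doubling T i j k : ℕ) : F)) = doubling fun i j k => (T i j k : F) := by
  ext (i | y) (j | x) (_ | k) <;> simp [doubling]

variable [Fintype α] [Fintype β]

theorem tensorRank_doubling_le (T : α → β → γ → F) :
    tensorRank (doubling T) ≤ tensorRank T + (Fintype.card α + Fintype.card β) := by
  classical
  obtain ⟨a, b, c, h⟩ := isSumOfSimple_tensorRank T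
  have hsum := isSumOfSimple_card (κ := Fin (tensorRank T) ⊕ (α ⊕ β)) (T := doubling T)
    (Sum.elim (fun l => Sum.elim (a l) 0) fun x => Pi.single x 1)
    (Sum.elim (fun l => Sum.elim (b l) 0) fun x => Pi.single x.swap 1)
    (Sum.elim (fun l k => k.elim 0 (c l)) fun _ => Pi.single none 1) (by
      rintro (i | y) (j | x) (_ | k) <;> simp [doubling, h, Pi.single_apply, eq_comm])
  simpa using hsum.tensorRank_le

theorem le_tensorRank_doubling (T : α → β → γ → F) :
    tensorRank T + (Fintype.card α + Fintype.card β) ≤ tensorRank (doubling T) := by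
  have hrows : LinearIndependent F fun y => doubling T (.inr y) := by
    refine Fintype.linearIndependent_iff.2 fun w hw y => ?_
    simpa [Finset.sum_apply, doubling] using congrFun (congrFun hw (.inl y)) none
  obtain ⟨c, hc⟩ := exists_tensorRank_add_card_le (doubling T) Sum.inr hrows
  let T' : β ⊕ α → α → Option γ → F := fun j i k =>
    doubling T (.inl i) j k + ∑ y, c (.inl i) y * doubling T (.inr y) j k
  have hT' : tensorRank T' + Fintype.card β ≤ tensorRank (doubling T) := by
    refine (Nat.add_le_add_right ?_ _).trans hc
    rw [← tensorRank_swap₁₂ T']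
    exact tensorRank_comp_le
      (fun i j k => doubling T i j k + ∑ y, c i y * doubling T (.inr y) j k) Sum.inl id id
  have hcols : LinearIndependent F fun x => T' (.inr x) := by
    refine Fintype.linearIndependent_iff.2 fun w hw x => ?_
    simpa [Finset.sum_apply, T', doubling] using congrFun (congrFun hw x) none
  obtain ⟨d, hd⟩ := exists_tensorRank_add_card_le T' Sum.inr hcols
  let T'' : β ⊕ α → α → Option γ → F := fun j i k => T' j i k + ∑ x, d j x * T' (.inr x) i k
  have hcore (i : α) (j : β) (k : γ) : T'' (.inl j) (id i) (some k) = T i j k := by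
    simp [T'', T', doubling]
  have hT : tensorRank T ≤ tensorRank T'' := by
    simpa only [hcore, tensorRank_swap₁₂ T] using tensorRank_comp_le T'' Sum.inl id some
  calc tensorRank T + (Fintype.card α + Fintype.card β)
    _ ≤ tensorRank T'' + Fintype.card α + Fintype.card β := by omega
    _ ≤ tensorRank T' + Fintype.card β := Nat.add_le_add_right hd _
    _ ≤ tensorRank (doubling T) := hT'

theorem tensorRank_doubling (T : α → β → γ → F) :
    tensorRank (doubling T) = tensorRank T + (Fintype.card α + Fintype.card β) :=
  (tensorRank_doubling_le T).antisymm (le_tensorRank_doubling T)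

end Double

section Border

variable {F M α β γ ι : Type*} [Field F] [DecidableEq α]

/-- The tensor `T` with one new column `none` and new layers indexed by `ι`, the layer `x` having
its only nonzero entry in the new column and the row `e x`. -/
def bordering [Zero M] [One M] (e : ι → α) (T : α → β → γ → M) : α → Option β → γ ⊕ ι → M
  | i, some j, .inl k => T i j k
  | i, none, .inr x => if i = e x then 1 else 0
  | _, _, _ => 0

theorem bordering_eq_zero_or_one [Zero M] [One M] (e : ι → α) {T : α → β → γ → M}
    (hT : ∀ i j k, T i j k = 0 ∨ T i j k = 1) (i j k) :
    bordering e T i j k = 0 ∨ bordering e T i j k = 1 := by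
  rcases j with _ | j <;> rcases k with k | x <;> grind [bordering]

theorem natCast_bordering (e : ι → α) (T : α → β → γ → ℕ) :
    (fun i j k => ((bordering e T i j k : ℕ) : F)) = bordering e fun i j k => (T i j k : F) := by
  ext i (_ | j) (k | x) <;> simp [bordering]

variable [Finite β] [Fintype ι]

theorem tensorRank_bordering_le [Finite α] (e : ι → α) (T : α → β → γ → F) :
    tensorRank (bordering e T) ≤ tensorRank T + Fintype.card ι := by
  classical
  obtain ⟨a, b, c, h⟩ := isSumOfSimple_tensorRank T
  have hsum := isSumOfSimple_card (κ := Fin (tensorRank T) ⊕ ι) (T := bordering e T)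
    (Sum.elim a fun x => Pi.single (e x) 1)
    (Sum.elim (fun l j => j.elim 0 (b l)) fun _ => Pi.single none 1)
    (Sum.elim (fun l => Sum.elim (c l) 0) fun x => Pi.single (.inr x) 1) (by
      rintro i (_ | j) (k | x) <;> simp [bordering, h, Pi.single_apply])
  simpa using hsum.tensorRank_le

theorem le_tensorRank_bordering [Finite γ] {e : ι → α} (he : e.Injective) (T : α → β → γ → F) :
    tensorRank T + Fintype.card ι ≤ tensorRank (bordering e T) := by
  classical
  have hlayers : LinearIndependent F fun x j i => bordering e T i j (.inr x) := by
    refine Fintype.linearIndependent_iff.2 fun w hw x => ?_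
    simpa [Finset.sum_apply, bordering, he.eq_iff] using congrFun (congrFun hw none) (e x)
  obtain ⟨c, hc⟩ := exists_tensorRank_add_card_le (fun k j i => bordering e T i j k) Sum.inr hlayers
  let T' : γ ⊕ ι → Option β → α → F := fun k j i =>
    bordering e T i j k + ∑ x, c k x * bordering e T i j (.inr x)
  have hcore (i : α) (j : β) (k : γ) : T' (.inl k) (some j) (id i) = T i j k := by
    simp [T', bordering]
  have hT : tensorRank T ≤ tensorRank T' := by
    simpa only [hcore, tensorRank_swap₁₃ T] using tensorRank_comp_le T' Sum.inl some id
  calc tensorRank T + Fintype.card ι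
    _ ≤ tensorRank T' + Fintype.card ι := Nat.add_le_add_right hT _
    _ ≤ tensorRank (fun k j i => bordering e T i j k) := hc
    _ = tensorRank (bordering e T) := tensorRank_swap₁₃ _

theorem tensorRank_bordering [Finite α] [Finite γ] {e : ι → α} (he : e.Injective)
    (T : α → β → γ → F) :
    tensorRank (bordering e T) = tensorRank T + Fintype.card ι :=
  (tensorRank_bordering_le e T).antisymm (le_tensorRank_bordering he T)

end Border

section ZeroOneRank

/-- Some `a × b × c` tensor with entries `0` and `1` has rank `R` over every field. The tensor is
valued in `ℕ` so that it does not depend on the field. -/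
def IsZeroOneRank (a b c R : ℕ) : Prop :=
  ∃ T : Fin a → Fin b → Fin c → ℕ, (∀ i j k, T i j k = 0 ∨ T i j k = 1) ∧
    ∀ (F : Type u) [Field F], tensorRank (fun i j k => (T i j k : F)) = R

variable {a b c a' b' c' R : ℕ}

theorem isZeroOneRank_of_card_le {α β γ : Type*} [Fintype α] [Fintype β] [Fintype γ]
    (ha : Fintype.card α ≤ a) (hb : Fintype.card β ≤ b) (hc : Fintype.card γ ≤ c)
    (T : α → β → γ → ℕ) (h01 : ∀ i j k, T i j k = 0 ∨ T i j k = 1)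
    (hR : ∀ (F : Type u) [Field F], tensorRank (fun i j k => (T i j k : F)) = R) :
    IsZeroOneRank.{u} a b c R := by
  obtain ⟨e⟩ : Nonempty (α ↪ Fin a) := Function.Embedding.nonempty_of_card_le (by simpa using ha)
  obtain ⟨f⟩ : Nonempty (β ↪ Fin b) := Function.Embedding.nonempty_of_card_le (by simpa using hb)
  obtain ⟨g⟩ : Nonempty (γ ↪ Fin c) := Function.Embedding.nonempty_of_card_le (by simpa using hc)
  refine ⟨zeroExtend e f g T, fun i j k => ?_, fun F _ => ?_⟩
  · exact zeroExtend_induction (p := fun x : ℕ => x = 0 ∨ x = 1) (Or.inl rfl) h01 e f g i j k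
  · rw [natCast_zeroExtend, tensorRank_zeroExtend e.injective f.injective g.injective, hR]

theorem IsZeroOneRank.mono (h : IsZeroOneRank.{u} a b c R) (ha : a ≤ a') (hb : b ≤ b')
    (hc : c ≤ c') : IsZeroOneRank.{u} a' b' c' R := by
  obtain ⟨T, h01, hR⟩ := h
  exact isZeroOneRank_of_card_le (by simpa) (by simpa) (by simpa) T h01 fun F _ => hR F

theorem isZeroOneRank_one : IsZeroOneRank.{u} 1 1 1 1 :=
  ⟨1, fun _ _ _ => Or.inr rfl, fun F _ => by
    simpa [Pi.one_def] using tensorRank_one (F := F) (α := Fin 1) (β := Fin 1) (γ := Fin 1)⟩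

theorem IsZeroOneRank.double (h : IsZeroOneRank.{u} a b c R) :
    IsZeroOneRank.{u} (a + b) (b + a) (c + 1) (R + (a + b)) := by
  obtain ⟨T, h01, hR⟩ := h
  refine isZeroOneRank_of_card_le (by simp) (by simp) (by simp) (doubling T)
    (doubling_eq_zero_or_one h01) fun F _ => ?_
  rw [natCast_doubling, tensorRank_doubling, hR, Fintype.card_fin, Fintype.card_fin]

theorem IsZeroOneRank.border (h : IsZeroOneRank.{u} a b c R) {N : ℕ} (hN : N ≤ a) :
    IsZeroOneRank.{u} a (b + 1) (c + N) (R + N) := by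
  obtain ⟨T, h01, hR⟩ := h
  refine isZeroOneRank_of_card_le (by simp) (by simp) (by simp) (bordering (Fin.castLE hN) T)
    (bordering_eq_zero_or_one _ h01) fun F _ => ?_
  rw [natCast_bordering, tensorRank_bordering (Fin.castLE_injective hN), hR, Fintype.card_fin]

theorem isZeroOneRank_log_layers {m : ℕ} (hm : m ≠ 0) :
    IsZeroOneRank.{u} m m (Nat.log 2 m + 1) (2 * m + 1 - 2 * (Nat.digits 2 m).sum) := by
  induction m using Nat.strong_induction_on with
  | _ m ih =>
    obtain rfl | h1 := eq_or_ne m 1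
    · simpa using isZeroOneRank_one
    · have hhalf := (ih (m / 2) (by omega) (by omega)).double.mono (a' := m) (b' := m)
        (by omega) (by omega) le_rfl
      have hlog : Nat.log 2 m = Nat.log 2 (m / 2) + 1 :=
        Nat.log_of_one_lt_of_le one_lt_two (by omega)
      have hsum : (Nat.digits 2 m).sum = m % 2 + (Nat.digits 2 (m / 2)).sum := by
        rw [Nat.digits_def' one_lt_two (by omega), List.sum_cons]
      rw [hlog, hsum]
      convert hhalf using 1
      have := Nat.digit_sum_le 2 (m / 2)
      omega

theorem isZeroOneRank_cube {n : ℕ} (hn : 2 ≤ n) :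
    IsZeroOneRank.{u} n n n
      (3 * n - 2 * (Nat.digits 2 (n - 1)).sum - Nat.log 2 (n - 1) - 2) := by
  obtain ⟨m, rfl⟩ : ∃ m, n = m + 1 := ⟨n - 1, by omega⟩
  rw [Nat.add_sub_cancel]
  have hlog : Nat.log 2 m < m := Nat.log_lt_self 2 (by omega)
  have hsum := Nat.digit_sum_le 2 m
  have h := ((isZeroOneRank_log_layers (m := m) (by omega)).border
    (Nat.sub_le m (Nat.log 2 m))).mono m.le_succ le_rfl le_rfl
  convert h using 1 <;> omega

end ZeroOneRank

theorem sum_digits_le_log_add_one_mul {b : ℕ} (hb : 1 < b) (m : ℕ) :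
    (Nat.digits b m).sum ≤ (Nat.log b m + 1) * (b - 1) := by
  obtain rfl | hm := eq_or_ne m 0
  · simp
  · rw [← Nat.length_digits b m hb hm, ← smul_eq_mul]
    exact List.sum_le_card_nsmul _ _ fun d hd => Nat.le_sub_one_of_lt (Nat.digits_lt_base hb hd)

theorem three_mul_le_add_seven_mul_log {n : ℕ} (hn : 2 ≤ n) :
    3 * n ≤ 3 * n - 2 * (Nat.digits 2 (n - 1)).sum - Nat.log 2 (n - 1) - 2 +
      7 * Nat.log 2 n := by
  have hsum := sum_digits_le_log_add_one_mul one_lt_two (n - 1)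
  have hlog : Nat.log 2 (n - 1) ≤ Nat.log 2 n := Nat.log_mono_right (Nat.sub_le n 1)
  have hpos : 0 < Nat.log 2 n := Nat.log_pos one_lt_two hn
  omega

theorem stmt1_general {n : ℕ} (hn : 2 ≤ n) :
    ∃ T : Fin n → Fin n → Fin n → ℕ, (∀ i j k, T i j k = 0 ∨ T i j k = 1) ∧
      ∀ (F : Type u) [Field F],
        rank3 (fun i j k => (T i j k : F)) =
            3 * n - 2 * (Nat.digits 2 (n - 1)).sum - Nat.log 2 (n - 1) - 2 ∧
          3 * n ≤ rank3 (fun i j k => (T i j k : F)) + 7 * Nat.log 2 n := by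
  obtain ⟨T, h01, hT⟩ := isZeroOneRank_cube.{u} hn
  refine ⟨T, h01, fun F _ => ?_⟩
  rw [rank3_eq_tensorRank, hT]
  exact ⟨rfl, three_mul_le_add_seven_mul_log hn⟩

/-- For every field `F` and every `n ≥ 2` there is a 0/1-valued tensor of size `[n]³`
whose rank over `F` is exactly `3n - 2H(n-1) - ⌊lg (n-1)⌋ - 2`, where `H(m)` is the
number of 1s in the binary expansion of `m`.  In particular this rank is at least
`3n - C·lg n` for an absolute constant `C > 0`. -/
theorem stmt1 : ∃ C : ℕ, 0 < C ∧ ∀ (F : Type) [Field F] (n : ℕ), 2 ≤ n →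
    ∃ T : Fin n → Fin n → Fin n → F,
      (∀ i j k, T i j k = 0 ∨ T i j k = 1) ∧
      rank3 T = 3 * n - 2 * (Nat.digits 2 (n - 1)).sum - Nat.log 2 (n - 1) - 2 ∧
      3 * n ≤ rank3 T + C * Nat.log 2 n := by
  refine ⟨7, by norm_num, fun F _ n hn => ?_⟩
  obtain ⟨T, h01, hT⟩ := stmt1_general hn
  exact ⟨fun i j k => T i j k, fun i j k => (h01 i j k).imp (by simp [·]) (by simp [·]), hT F⟩
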